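/- Let n ≥ 3 be even. Then there exist exactly 2 functions σ : (ZMod n) × Bool → ZMod 3 with all values in {1, 2} ⊆ ZMod 3 that satisfy σ(i,false) + σ(i,true) + σ(i+1,true) + σ(i+1,false) = 0 for every i ∈ ZMod n and for which σ(i,false) = σ(i,true) holds for some index i; these two functions are negatives of each other and satisfy σ(i+1,false) = σ(i+1,true) = −σ(i,false) for all i. -/

import Mathlib

/-- `σ` has all values in `{1, 2} ⊆ ZMod 3`, satisfies the propriety conditions of the
quadrilateral faces of `CL_n`, and takes equal values at the two endpoints of some rung. -/
def IsQuadProperWithEqualRung (n : ℕ) (σ : ZMod n × Bool → ZMod 3) : Prop :=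
  (∀ v, σ v = 1 ∨ σ v = 2) ∧
  (∀ i : ZMod n,
    σ (i, false) + σ (i, true) + σ (i + 1, true) + σ (i + 1, false) = 0) ∧
  (∃ i : ZMod n, σ (i, false) = σ (i, true))

theorem step_aux : ∀ a b c d : ZMod 3, (a = 1 ∨ a = 2) → (b = 1 ∨ b = 2) → (c = 1 ∨ c = 2) →
    (d = 1 ∨ d = 2) → a + b + c + d = 0 → a = b → d = -a ∧ c = -a := by
  rintro a b c d (rfl | rfl) (rfl | rfl) (rfl | rfl) (rfl | rfl) <;> decide

theorem eq_add_nat (n : ℕ) (hn : 3 ≤ n) (i j : ZMod n) : ∃ k : ℕ, i = j + (k : ZMod n) := by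
  have : NeZero n := ⟨by omega⟩
  exact ⟨(i - j).val, by simp⟩

theorem step_rung {n : ℕ} {σ : ZMod n × Bool → ZMod 3} (h : IsQuadProperWithEqualRung n σ)
    (i : ZMod n) (e : σ (i, false) = σ (i, true)) :
    σ (i + 1, false) = -σ (i, false) ∧ σ (i + 1, true) = -σ (i, false) :=
  step_aux _ _ _ _ (h.1 _) (h.1 _) (h.1 _) (h.1 _) (h.2.1 i) e

theorem all_rung {n : ℕ} (hn : 3 ≤ n) {σ : ZMod n × Bool → ZMod 3}
    (h : IsQuadProperWithEqualRung n σ) (i : ZMod n) : σ (i, false) = σ (i, true) := by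
  obtain ⟨j, hj⟩ := h.2.2
  obtain ⟨k, rfl⟩ := eq_add_nat n hn i j
  induction k with
  | zero => simpa using hj
  | succ k ih =>
    have := step_rung h _ ih
    rw [Nat.cast_succ, ← add_assoc, this.1, this.2]

theorem eq_of_zero {n : ℕ} (hn : 3 ≤ n) {σ τ : ZMod n × Bool → ZMod 3}
    (h : IsQuadProperWithEqualRung n σ) (h' : IsQuadProperWithEqualRung n τ)
    (e : σ (0, false) = τ (0, false)) : σ = τ := by
  have key : ∀ i, σ (i, false) = τ (i, false) := by
    intro i
    obtain ⟨k, rfl⟩ := eq_add_nat n hn i 0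
    induction k with
    | zero => simpa using e
    | succ k ih =>
      have a := step_rung h _ (all_rung hn h (0 + (k : ZMod n)))
      have b := step_rung h' _ (all_rung hn h' (0 + (k : ZMod n)))
      rw [Nat.cast_succ, ← add_assoc, a.1, b.1, ih]
  funext ⟨i, b⟩
  cases b
  · exact key i
  · rw [← all_rung hn h, ← all_rung hn h', key]

theorem neg_proper {n : ℕ} {σ : ZMod n × Bool → ZMod 3}
    (h : IsQuadProperWithEqualRung n σ) : IsQuadProperWithEqualRung n (-σ) := by
  refine ⟨fun v => ?_, fun i => ?_, ?_⟩
  · rcases h.1 v with e | e <;> rw [Pi.neg_apply, e] <;> decide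
  · have := h.2.1 i
    simp only [Pi.neg_apply]
    linear_combination -this
  · obtain ⟨i, hi⟩ := h.2.2
    exact ⟨i, by simp [hi]⟩

theorem neg_aux : ∀ a b : ZMod 3, (a = 1 ∨ a = 2) → (b = 1 ∨ b = 2) → a ≠ b → b = -a := by
  decide

theorem ne_neg_aux : ∀ a : ZMod 3, (a = 1 ∨ a = 2) → a ≠ -a := by
  decide

theorem alt_aux : ∀ x : ZMod 2, (if x = 0 then (1 : ZMod 3) else 2) + (if x = 0 then 1 else 2)
    + (if x + 1 = 0 then 1 else 2) + (if x + 1 = 0 then 1 else 2) = 0 := by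
  decide

theorem exists_proper (n : ℕ) (hpar : Even n) :
    ∃ σ : ZMod n × Bool → ZMod 3, IsQuadProperWithEqualRung n σ := by
  refine ⟨fun v => if ZMod.castHom hpar.two_dvd (ZMod 2) v.1 = 0 then 1 else 2,
    fun v => ?_, fun i => ?_, 0, rfl⟩
  · dsimp only
    split_ifs <;> simp
  · dsimp only
    rw [map_add, map_one]
    exact alt_aux _

theorem eq_neg_of_ne {n : ℕ} (hn : 3 ≤ n) {σ τ : ZMod n × Bool → ZMod 3}
    (h : IsQuadProperWithEqualRung n σ) (h' : IsQuadProperWithEqualRung n τ)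
    (e : σ ≠ τ) : τ = -σ :=
  eq_of_zero hn h' (neg_proper h)
    (neg_aux _ _ (h.1 _) (h'.1 _) fun e' => e (eq_of_zero hn h h' e'))

/-- For even `n ≥ 3`, there are exactly 2 functions `σ : (ZMod n) × Bool → ZMod 3` with
all values in `{1, 2}` satisfying the propriety conditions of the quadrilateral faces of
`CL_n` and having `σ (i, false) = σ (i, true)` for some `i`; these two functions are
negatives of each other, and each satisfies
`σ (i+1, false) = σ (i+1, true) = -σ (i, false)` for all `i`. -/
theorem heawood_quad_even_equal_rung (n : ℕ) (hn : 3 ≤ n) (hpar : Even n) :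
    Nat.card {σ : ZMod n × Bool → ZMod 3 // IsQuadProperWithEqualRung n σ} = 2 ∧
    (∀ σ τ : ZMod n × Bool → ZMod 3, IsQuadProperWithEqualRung n σ →
      IsQuadProperWithEqualRung n τ → σ ≠ τ → τ = -σ) ∧
    (∀ σ : ZMod n × Bool → ZMod 3, IsQuadProperWithEqualRung n σ →
      ∀ i : ZMod n,
        σ (i + 1, false) = -σ (i, false) ∧ σ (i + 1, true) = -σ (i, false)) := by
  refine ⟨?_, fun σ τ h h' e => eq_neg_of_ne hn h h' e,
    fun σ h i => step_rung h i (all_rung hn h i)⟩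
  obtain ⟨σ, h⟩ := exists_proper n hpar
  rw [Nat.card_eq_two_iff]
  refine ⟨⟨σ, h⟩, ⟨-σ, neg_proper h⟩, ?_, ?_⟩
  · intro e
    exact ne_neg_aux _ (h.1 (0, false)) (congrFun (congrArg Subtype.val e) (0, false))
  · refine Set.eq_univ_of_forall ?_
    rintro ⟨τ, h'⟩
    by_cases e : σ = τ
    · left
      exact Subtype.ext e.symm
    · right
      exact Subtype.ext (eq_neg_of_ne hn h h' e)
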